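/- arXiv:2407.04148 — 3 statements merged into one kernel-verified Lean document; each statement's English description precedes it below -/
import Mathlib

section
/- In the notation of the context, set β = β₂/β₁, λ₁ = (a_d²−a_s²)/((a_d²−1)·√β₂), and λ₂ = (a_d²−a_s²)/((a_s²−1)·√β₁). Then for every fixed σ ∈ ℝ: G₁(σ+iτ)·β^{−(σ+iτ)/2} → iλ₁ as τ → +∞ and → −iλ₁ as τ → −∞; and G₂(σ+iτ)·β^{(σ+iτ)/2} → iλ₂ as τ → +∞ and → −iλ₂ as τ → −∞. -/
open MeasureTheory Filter Set Complex

noncomputable section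

/-- a_d = c_d / V -/
def aD (cd V : ℝ) : ℝ := cd / V

/-- a_s = c_s / V -/
def aS (cs V : ℝ) : ℝ := cs / V

/-- β₁ = a_s² / (a_d² − 1) -/
def beta1 (cd cs V : ℝ) : ℝ := (aS cs V) ^ 2 / ((aD cd V) ^ 2 - 1)

/-- β₂ = a_d² / (a_s² − 1) -/
def beta2 (cd cs V : ℝ) : ℝ := (aD cd V) ^ 2 / ((aS cs V) ^ 2 - 1)

/-- b₁(s) = [(a_d²−a_s²)(s−1)−ν a_s²] / (2(a_d²−1) β₂^{(1−s)/2} β₁^{s/2}) -/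
def bb1 (nu cd cs V : ℝ) (s : ℂ) : ℂ :=
  ((((aD cd V) ^ 2 - (aS cs V) ^ 2 : ℝ) : ℂ) * (s - 1) - (nu : ℂ) * (((aS cs V) ^ 2 : ℝ) : ℂ)) /
    (2 * ((((aD cd V) ^ 2 - 1 : ℝ)) : ℂ) * ((beta2 cd cs V : ℝ) : ℂ) ^ ((1 - s) / 2)
      * ((beta1 cd cs V : ℝ) : ℂ) ^ (s / 2))

/-- b₂(s) = [(a_d²−a_s²)(s−1)−ν(a_d²−2a_s²)] / (2(a_s²−1) β₁^{(1−s)/2} β₂^{s/2}) -/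
def bb2 (nu cd cs V : ℝ) (s : ℂ) : ℂ :=
  ((((aD cd V) ^ 2 - (aS cs V) ^ 2 : ℝ) : ℂ) * (s - 1)
      - (nu : ℂ) * (((aD cd V) ^ 2 - 2 * (aS cs V) ^ 2 : ℝ) : ℂ)) /
    (2 * ((((aS cs V) ^ 2 - 1 : ℝ)) : ℂ) * ((beta1 cd cs V : ℝ) : ℂ) ^ ((1 - s) / 2)
      * ((beta2 cd cs V : ℝ) : ℂ) ^ (s / 2))

/-- G₁(s) = b₁(s)·Γ(1−s/2)Γ((s−ν)/2) / (Γ((s+1−ν)/2)Γ((3−s)/2)) -/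
def GG1 (nu cd cs V : ℝ) (s : ℂ) : ℂ :=
  bb1 nu cd cs V s * (Complex.Gamma (1 - s / 2) * Complex.Gamma ((s - (nu : ℂ)) / 2)) /
    (Complex.Gamma ((s + 1 - (nu : ℂ)) / 2) * Complex.Gamma ((3 - s) / 2))

/-- G₂(s) = b₂(s)·Γ(1−s/2)Γ((s−ν)/2) / (Γ((s+1−ν)/2)Γ((3−s)/2)) -/
def GG2 (nu cd cs V : ℝ) (s : ℂ) : ℂ :=
  bb2 nu cd cs V s * (Complex.Gamma (1 - s / 2) * Complex.Gamma ((s - (nu : ℂ)) / 2)) /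
    (Complex.Gamma ((s + 1 - (nu : ℂ)) / 2) * Complex.Gamma ((3 - s) / 2))

lemma aux_sum_bound (x y : ℝ) (hy : 1 ≤ |y|) (n : ℕ) :
    1 / ((x + n) ^ 2 + y ^ 2) ≤ (2 + 2 * (1 - x) ^ 2) * (1 / ((n : ℝ) + 1) ^ 2) := by
  have hy2 : 1 ≤ y ^ 2 := by
    rw [← sq_abs]; nlinarith
  have h1 : 0 < (x + n) ^ 2 + y ^ 2 := by positivity
  have h2 : 0 < ((n : ℝ) + 1) ^ 2 := by positivity
  rw [mul_one_div, div_le_div_iff₀ h1 h2]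
  nlinarith [sq_nonneg ((x + n) - (1 - x)), mul_nonneg (sq_nonneg (1 - x)) (sq_nonneg (x + n)),
    mul_nonneg (sq_nonneg (1 - x)) (sub_nonneg.2 hy2)]

lemma aux_summable_base : Summable (fun n : ℕ => 1 / ((n : ℝ) + 1) ^ 2) := by
  have := (summable_nat_add_iff 1).2 (Real.summable_one_div_nat_pow.2 (one_lt_two))
  simpa using this

lemma aux_summable (x y : ℝ) (hy : 1 ≤ |y|) :
    Summable (fun n : ℕ => 1 / ((x + n) ^ 2 + y ^ 2)) :=
  Summable.of_nonneg_of_le (fun n => by positivity) (aux_sum_bound x y hy)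
    (aux_summable_base.mul_left _)

lemma aux_sum_tendsto (l : Filter ℝ) (hl : Tendsto (fun y : ℝ => |y|) l atTop) (x : ℝ) :
    Tendsto (fun y : ℝ => ∑' n : ℕ, 1 / ((x + n) ^ 2 + y ^ 2)) l (nhds 0) := by
  have h := tendsto_tsum_of_dominated_convergence (𝓕 := l)
    (f := fun (y : ℝ) (n : ℕ) => 1 / ((x + n) ^ 2 + y ^ 2)) (g := fun _ => (0 : ℝ))
    (aux_summable_base.mul_left (2 + 2 * (1 - x) ^ 2)) ?_ ?_
  · simpa using h
  · intro n
    have : Tendsto (fun y : ℝ => (x + n) ^ 2 + y ^ 2) l atTop := by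
      apply tendsto_atTop_add_const_left
      have := (tendsto_pow_atTop (α := ℝ) two_ne_zero).comp hl
      refine this.congr fun y => ?_
      simp
    simpa [Function.comp_def] using tendsto_inv_atTop_zero.comp this
  · filter_upwards [hl.eventually_ge_atTop 1] with y hy n
    rw [Real.norm_of_nonneg (by positivity)]
    exact aux_sum_bound x y hy n

lemma aux_ne (x y : ℝ) (hy : 1 ≤ |y|) : (x + y * I : ℂ) ≠ 0 := by
  intro h
  have := congrArg Complex.im h
  simp at this
  rw [this] at hy
  simp at hy
  linarith

lemma aux_Gamma_ne (x y : ℝ) (hy : 1 ≤ |y|) : Complex.Gamma (x + y * I) ≠ 0 := by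
  apply Complex.Gamma_ne_zero
  intro m h
  have := congrArg Complex.im h
  simp at this
  rw [this] at hy
  simp at hy
  linarith

lemma aux_ratio_bound (x a b y : ℝ) (hy : 1 ≤ |y|) :
    ‖Complex.Gamma ((x + a : ℝ) + y * I) * Complex.Gamma ((x + b : ℝ) + y * I) /
      (Complex.Gamma ((x + a + b : ℝ) + y * I) * Complex.Gamma (x + y * I)) - 1‖ ≤
    Real.exp (|a * b| * ((∑' n : ℕ, 1 / ((x + a + n) ^ 2 + y ^ 2)) +
      ∑' n : ℕ, 1 / ((x + b + n) ^ 2 + y ^ 2))) - 1 := by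
  have hlim : Tendsto (fun n : ℕ => Complex.GammaSeq ((x + a : ℝ) + y * I) n *
      Complex.GammaSeq ((x + b : ℝ) + y * I) n /
      (Complex.GammaSeq ((x + a + b : ℝ) + y * I) n * Complex.GammaSeq (x + y * I) n)) atTop
      (nhds (Complex.Gamma ((x + a : ℝ) + y * I) * Complex.Gamma ((x + b : ℝ) + y * I) /
      (Complex.Gamma ((x + a + b : ℝ) + y * I) * Complex.Gamma (x + y * I)))) :=
    ((Complex.GammaSeq_tendsto_Gamma _).mul (Complex.GammaSeq_tendsto_Gamma _)).div
      ((Complex.GammaSeq_tendsto_Gamma _).mul (Complex.GammaSeq_tendsto_Gamma _))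
      (mul_ne_zero (aux_Gamma_ne _ _ hy) (aux_Gamma_ne _ _ hy))
  refine le_of_tendsto (hlim.sub_const 1).norm ?_
  filter_upwards [eventually_ge_atTop 1] with n hn
  have key : ∀ (c : ℝ) (j : ℕ), ((c : ℂ) + y * I + j) ≠ 0 := by
    intro c j
    have := aux_ne (c + j) y hy
    push_cast at this
    intro h; apply this; rw [← h]; ring
  have heq : Complex.GammaSeq ((x + a : ℝ) + y * I) n *
      Complex.GammaSeq ((x + b : ℝ) + y * I) n /
      (Complex.GammaSeq ((x + a + b : ℝ) + y * I) n * Complex.GammaSeq (x + y * I) n) =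
      ∏ j ∈ Finset.range (n + 1), (1 + (-(a * b : ℂ)) /
        ((((x + a : ℝ) : ℂ) + y * I + j) * (((x + b : ℝ) : ℂ) + y * I + j))) := by
    have hterm : ∀ j : ℕ, (1 + (-(a * b : ℂ)) /
        ((((x + a : ℝ) : ℂ) + y * I + j) * (((x + b : ℝ) : ℂ) + y * I + j))) =
        ((((x + a + b : ℝ) : ℂ) + y * I + j) * ((x : ℂ) + y * I + j)) /
        ((((x + a : ℝ) : ℂ) + y * I + j) * (((x + b : ℝ) : ℂ) + y * I + j)) := by
      intro j
      rw [eq_div_iff (mul_ne_zero (key _ j) (key _ j)), add_mul, one_mul,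
        div_mul_cancel₀ _ (mul_ne_zero (key _ j) (key _ j))]
      push_cast; ring
    simp_rw [hterm]
    rw [Finset.prod_div_distrib, Finset.prod_mul_distrib, Finset.prod_mul_distrib]
    have hp : ∀ c : ℝ, ∏ j ∈ Finset.range (n + 1), ((c : ℂ) + y * I + j) ≠ 0 := fun c =>
      Finset.prod_ne_zero_iff.2 fun j _ => key c j
    have hn0 : (n : ℂ) ≠ 0 := by exact_mod_cast (by omega : n ≠ 0)
    have hf : ((Nat.factorial n : ℕ) : ℂ) ≠ 0 := by exact_mod_cast Nat.factorial_ne_zero n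
    have hpow : (n : ℂ) ^ (((x + a : ℝ) : ℂ) + y * I) * (n : ℂ) ^ (((x + b : ℝ) : ℂ) + y * I) =
        (n : ℂ) ^ (((x + a + b : ℝ) : ℂ) + y * I) * (n : ℂ) ^ ((x : ℂ) + y * I) := by
      rw [← Complex.cpow_add _ _ hn0, ← Complex.cpow_add _ _ hn0]
      congr 1; push_cast; ring
    have h1 : (n : ℂ) ^ (((x + a + b : ℝ) : ℂ) + y * I) ≠ 0 := by
      simp [Complex.cpow_eq_zero_iff, hn0]
    have h2 : (n : ℂ) ^ ((x : ℂ) + y * I) ≠ 0 := by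
      simp [Complex.cpow_eq_zero_iff, hn0]
    have := hp x
    have := hp (x + a)
    have := hp (x + b)
    have := hp (x + a + b)
    unfold Complex.GammaSeq
    generalize ∏ j ∈ Finset.range (n + 1), (((x:ℝ) : ℂ) + y * I + j) = P1 at *
    generalize ∏ j ∈ Finset.range (n + 1), (((x+a:ℝ) : ℂ) + y * I + j) = P2 at *
    generalize ∏ j ∈ Finset.range (n + 1), (((x+b:ℝ) : ℂ) + y * I + j) = P3 at *
    generalize ∏ j ∈ Finset.range (n + 1), (((x+a+b:ℝ) : ℂ) + y * I + j) = P4 at *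
    generalize (n : ℂ) ^ (((x + a : ℝ) : ℂ) + y * I) = q1 at *
    generalize (n : ℂ) ^ (((x + b : ℝ) : ℂ) + y * I) = q2 at *
    generalize (n : ℂ) ^ (((x + a + b : ℝ) : ℂ) + y * I) = q3 at *
    generalize (n : ℂ) ^ ((x : ℂ) + y * I) = q4 at *
    field_simp
    linear_combination hpow
  rw [heq]
  refine (Finset.norm_prod_one_add_sub_one_le _ _).trans ?_
  gcongr
  have hns : ∀ (c : ℝ) (j : ℕ), ‖((c : ℂ) + y * I + j)‖ ^ 2 = (c + j) ^ 2 + y ^ 2 := by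
    intro c j
    rw [← Complex.normSq_eq_norm_sq, Complex.normSq_apply]
    simp; ring
  calc _ ≤ ∑ j ∈ Finset.range (n + 1), |a * b| * (1 / ((x + a + j) ^ 2 + y ^ 2) +
        1 / ((x + b + j) ^ 2 + y ^ 2)) := by
        apply Finset.sum_le_sum
        intro j _
        rw [norm_div, norm_mul, norm_neg, ← hns, ← hns, div_eq_mul_one_div]
        have e : ‖(a : ℂ) * b‖ = |a * b| := by simp
        rw [e]
        have p := norm_pos_iff.2 (key (x + a) j)
        have q := norm_pos_iff.2 (key (x + b) j)
        refine mul_le_mul_of_nonneg_left ?_ (abs_nonneg _)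
        generalize ‖(((x + a : ℝ) : ℂ) + y * I + j)‖ = P at *
        generalize ‖(((x + b : ℝ) : ℂ) + y * I + j)‖ = Q at *
        have : 0 < 1 / P := by positivity
        have : 0 < 1 / Q := by positivity
        have e1 : 1 / (P * Q) = (1 / P) * (1 / Q) := by field_simp
        have e2 : 1 / P ^ 2 = (1 / P) ^ 2 := by field_simp
        have e3 : 1 / Q ^ 2 = (1 / Q) ^ 2 := by field_simp
        rw [e1, e2, e3]
        nlinarith [sq_nonneg (1 / P - 1 / Q)]
    _ = |a * b| * ((∑ j ∈ Finset.range (n + 1), 1 / ((x + a + j) ^ 2 + y ^ 2)) +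
        ∑ j ∈ Finset.range (n + 1), 1 / ((x + b + j) ^ 2 + y ^ 2)) := by
        rw [← Finset.mul_sum, Finset.sum_add_distrib]
    _ ≤ _ := by
        gcongr
        · exact (aux_summable (x + a) y hy).sum_le_tsum _ (fun j _ => by positivity)
        · exact (aux_summable (x + b) y hy).sum_le_tsum _ (fun j _ => by positivity)

lemma aux_ratio (l : Filter ℝ) (hl : Tendsto (fun y : ℝ => |y|) l atTop) (x a b : ℝ) :
    Tendsto (fun y : ℝ => Complex.Gamma ((x + a : ℝ) + y * I) * Complex.Gamma ((x + b : ℝ) + y * I) /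
      (Complex.Gamma ((x + a + b : ℝ) + y * I) * Complex.Gamma (x + y * I))) l (nhds 1) := by
  rw [tendsto_iff_norm_sub_tendsto_zero]
  have h : Tendsto (fun y : ℝ => Real.exp (|a * b| * ((∑' n : ℕ, 1 / ((x + a + n) ^ 2 + y ^ 2)) +
      ∑' n : ℕ, 1 / ((x + b + n) ^ 2 + y ^ 2))) - 1) l (nhds 0) := by
    have h1 := ((aux_sum_tendsto l hl (x + a)).add (aux_sum_tendsto l hl (x + b))).const_mul |a * b|
    have h2 := ((Real.continuous_exp.tendsto _).comp h1).sub_const 1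
    simpa using h2
  refine squeeze_zero' (Eventually.of_forall fun _ => norm_nonneg _) ?_ h
  filter_upwards [hl.eventually_ge_atTop 1] with y hy
  exact aux_ratio_bound x a b y hy

lemma aux_K (l : Filter ℝ) (hl : Tendsto (fun y : ℝ => |y|) l atTop) (x c : ℝ) :
    Tendsto (fun y : ℝ => ((|y| : ℝ) : ℂ) *
      (Complex.Gamma ((x + c : ℝ) + (-y : ℝ) * I) * Complex.Gamma (x + y * I) /
      (Complex.Gamma ((x + 1 / 2 : ℝ) + y * I) *
        Complex.Gamma ((x + c + 1 / 2 : ℝ) + (-y : ℝ) * I)))) l (nhds 1) := by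
  have hA : Tendsto (fun y : ℝ => Complex.Gamma ((x + c : ℝ) + (-y : ℝ) * I) *
      Complex.Gamma ((x + 1 / 2 : ℝ) + (-y : ℝ) * I) /
      (Complex.Gamma ((x + c + 1 / 2 : ℝ) + (-y : ℝ) * I) * Complex.Gamma (x + (-y : ℝ) * I)))
      l (nhds 1) := by
    have := aux_ratio (l.map (fun y => -y)) (by rw [tendsto_map'_iff]; simpa [Function.comp_def] using hl)
      x c (1 / 2)
    rw [tendsto_map'_iff] at this
    exact this
  have hB := ((aux_ratio l hl x (1 / 2) (1 / 2)).norm).inv₀ (by simp)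
  have hC : Tendsto (fun y : ℝ => (‖((x : ℂ) + y * I) / y‖)⁻¹) l (nhds 1) := by
    have h0 : Tendsto (fun y : ℝ => x / y) l (nhds 0) := by
      rw [tendsto_zero_iff_norm_tendsto_zero]
      have := (tendsto_inv_atTop_zero.comp hl).const_mul |x|
      simpa [Function.comp_def, div_eq_mul_inv] using this
    have h1 : Tendsto (fun y : ℝ => ((x / y : ℝ) : ℂ) + I) l (nhds I) := by
      have := ((Complex.continuous_ofReal.tendsto 0).comp h0).add_const I
      simpa [Function.comp_def] using this
    have h2 := h1.norm.inv₀ (by simp)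
    simp only [Complex.norm_I, inv_one] at h2
    refine h2.congr' ?_
    filter_upwards [hl.eventually_ge_atTop 1] with y hy
    have hy0 : (y : ℂ) ≠ 0 := by
      intro h; have : y = 0 := by exact_mod_cast h
      rw [this] at hy; norm_num at hy
    congr 2
    push_cast
    field_simp
  have hBC := (Complex.continuous_ofReal.tendsto _).comp (hB.mul hC)
  have h := hA.mul hBC
  simp only [norm_one, inv_one, mul_one, Complex.ofReal_one] at h
  refine h.congr' ?_
  filter_upwards [hl.eventually_ge_atTop 1] with y hy
  have hy' : 1 ≤ |-y| := by simpa using hy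
  have g1 := aux_Gamma_ne x y hy
  have g2 := aux_Gamma_ne (x + 1 / 2) y hy
  have g5 := aux_Gamma_ne (x + c + 1 / 2) (-y) hy'
  have hw := aux_ne x y hy
  have hconj : ∀ t : ℝ, Complex.Gamma (t + (-y : ℝ) * I) =
      (starRingEnd ℂ) (Complex.Gamma (t + y * I)) := by
    intro t
    rw [← Complex.Gamma_conj]; congr 1; simp
  have hone : Complex.Gamma ((x + 1 / 2 + 1 / 2 : ℝ) + y * I) =
      (x + y * I) * Complex.Gamma (x + y * I) := by
    rw [← Complex.Gamma_add_one _ hw]; congr 1; push_cast; ring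
  simp only [Function.comp_apply]
  rw [hone, hconj (x + 1 / 2), hconj x]
  have n1 := norm_pos_iff.2 g1
  have n2 := norm_pos_iff.2 g2
  have nw := norm_pos_iff.2 hw
  have m1 := Complex.mul_conj' (Complex.Gamma (x + y * I))
  have m2 := Complex.mul_conj' (Complex.Gamma ((x + 1 / 2 : ℝ) + y * I))
  have c1 : (starRingEnd ℂ) (Complex.Gamma (x + y * I)) ≠ 0 := by simpa using g1
  have N1 : ((‖Complex.Gamma (x + y * I)‖ : ℝ) : ℂ) ≠ 0 := by exact_mod_cast n1.ne'
  have N2 : ((‖Complex.Gamma ((x + 1 / 2 : ℝ) + y * I)‖ : ℝ) : ℂ) ≠ 0 := by exact_mod_cast n2.ne'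
  have Nw : ((‖(x + y * I : ℂ)‖ : ℝ) : ℂ) ≠ 0 := by exact_mod_cast nw.ne'
  simp only [norm_div, norm_mul, Complex.norm_real, Real.norm_eq_abs]
  push_cast at *
  generalize (starRingEnd ℂ) (Complex.Gamma (x + y * I)) = C1 at *
  generalize (starRingEnd ℂ) (Complex.Gamma (x + 1 / 2 + y * I)) = C2 at *
  generalize ((‖Complex.Gamma (x + y * I)‖ : ℝ) : ℂ) = M1 at *
  generalize ((‖Complex.Gamma (x + 1 / 2 + y * I)‖ : ℝ) : ℂ) = M2 at *
  generalize ((‖(x + y * I : ℂ)‖ : ℝ) : ℂ) = W at *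
  generalize Complex.Gamma (x + y * I) = G1 at *
  generalize Complex.Gamma (x + 1 / 2 + y * I) = G2 at *
  generalize Complex.Gamma (x + c + 1 / 2 + -y * I) = G5 at *
  generalize Complex.Gamma (x + c + -y * I) = G6 at *
  have hyc : ((|y| : ℝ) : ℂ) ≠ 0 := by
    have : |y| ≠ 0 := by linarith
    exact_mod_cast this
  generalize ((|y| : ℝ) : ℂ) = Y at *
  field_simp
  linear_combination (-G6) * (C2 * G2 * m1 - G1 * C1 * m2)

lemma aux_M (l : Filter ℝ) (hl : Tendsto (fun y : ℝ => |y|) l atTop) (e : ℝ)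
    (he : ∀ᶠ y in l, y = e * |y|) (nu σ : ℝ) (P Q : ℂ) :
    Tendsto (fun τ : ℝ => (P * (((σ : ℂ) + (τ : ℂ) * I) - 1) - Q) *
      (Complex.Gamma (1 - ((σ : ℂ) + (τ : ℂ) * I) / 2) *
        Complex.Gamma ((((σ : ℂ) + (τ : ℂ) * I) - (nu : ℂ)) / 2) /
      (Complex.Gamma ((((σ : ℂ) + (τ : ℂ) * I) + 1 - (nu : ℂ)) / 2) *
        Complex.Gamma ((3 - ((σ : ℂ) + (τ : ℂ) * I)) / 2)))) l (nhds (2 * e * I * P)) := by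
  have hK := aux_K (l.map (fun y => y / 2)) (by
    rw [tendsto_map'_iff]
    simpa [Function.comp_def, abs_div] using hl.atTop_div_const (two_pos))
    ((σ - nu) / 2) (1 - σ / 2 - (σ - nu) / 2)
  rw [tendsto_map'_iff] at hK
  have hinv : Tendsto (fun y : ℝ => ((|y|⁻¹ : ℝ) : ℂ)) l (nhds 0) := by
    have := (Complex.continuous_ofReal.tendsto _).comp (tendsto_inv_atTop_zero.comp hl)
    simpa [Function.comp_def] using this
  have hN : Tendsto (fun τ : ℝ => 2 * P * e * I + 2 * (P * (σ - 1) - Q) * ((|τ|⁻¹ : ℝ) : ℂ)) l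
      (nhds (2 * e * I * P)) := by
    have := (hinv.const_mul (2 * (P * (σ - 1) - Q))).const_add (2 * P * e * I)
    convert this using 2
    ring
  have h := hN.mul hK
  rw [mul_one] at h
  refine h.congr' ?_
  filter_upwards [hl.eventually_ge_atTop 1, he] with τ h1 h2
  simp only [Function.comp_apply]
  have hY : ((|τ| : ℝ) : ℂ) ≠ 0 := by
    have : |τ| ≠ 0 := by linarith
    exact_mod_cast this
  have h2c : (τ : ℂ) = e * ((|τ| : ℝ) : ℂ) := by exact_mod_cast h2
  rw [← mul_assoc]
  congr 1
  · rw [abs_div, abs_two]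
    push_cast
    conv_rhs => rw [h2c]
    field_simp
    ring
  · congr 2
    · congr 1; push_cast; ring
    · congr 1; push_cast; ring
    · congr 1; push_cast; ring
    · congr 1; push_cast; ring

lemma aux_cpow (p q : ℝ) (hp : 0 < p) (hq : 0 < q) (s : ℂ) :
    ((q / p : ℝ) : ℂ) ^ (-(s / 2)) = (Real.sqrt q : ℂ)⁻¹ *
      ((q : ℂ) ^ ((1 - s) / 2) * (p : ℂ) ^ (s / 2)) := by
  have hp' : (p : ℂ) ≠ 0 := by exact_mod_cast hp.ne'
  have hq' : (q : ℂ) ≠ 0 := by exact_mod_cast hq.ne'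
  have hqp' : ((q / p : ℝ) : ℂ) ≠ 0 := by exact_mod_cast (div_pos hq hp).ne'
  have hs : (Real.sqrt q : ℂ)⁻¹ = Complex.exp (-(Real.log q : ℂ) / 2) := by
    rw [← Complex.ofReal_inv, Real.sqrt_eq_rpow, ← Real.rpow_neg hq.le, Real.rpow_def_of_pos hq]
    push_cast; congr 1; ring
  rw [hs, Complex.cpow_def_of_ne_zero hp', Complex.cpow_def_of_ne_zero hq',
    Complex.cpow_def_of_ne_zero hqp', ← Complex.ofReal_log hp.le, ← Complex.ofReal_log hq.le,
    ← Complex.ofReal_log (div_pos hq hp).le, Real.log_div hq.ne' hp.ne', ← Complex.exp_add,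
    ← Complex.exp_add]
  congr 1; push_cast; ring

lemma aux_cpow' (p q : ℝ) (hp : 0 < p) (hq : 0 < q) (s : ℂ) :
    ((q / p : ℝ) : ℂ) ^ (s / 2) = (Real.sqrt p : ℂ)⁻¹ *
      ((p : ℂ) ^ ((1 - s) / 2) * (q : ℂ) ^ (s / 2)) := by
  rw [← aux_cpow q p hq hp]
  rw [← inv_div p q, Complex.ofReal_inv, Complex.inv_cpow, Complex.cpow_neg]
  rw [Complex.arg_ofReal_of_nonneg (div_pos hp hq).le]
  exact Real.pi_pos.ne

lemma aux_pos (cd cs V : ℝ) (hV : 0 < V) (hVs : V < cs) (hsd : cs < cd) :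
    0 < (aS cs V) ^ 2 - 1 ∧ 0 < (aD cd V) ^ 2 - 1 ∧ 0 < beta1 cd cs V ∧ 0 < beta2 cd cs V := by
  have h1 : 1 < aS cs V := by unfold aS; rwa [one_lt_div hV]
  have h2 : 1 < aD cd V := by unfold aD; rw [one_lt_div hV]; linarith
  have h3 : 0 < (aS cs V) ^ 2 - 1 := by nlinarith
  have h4 : 0 < (aD cd V) ^ 2 - 1 := by nlinarith
  refine ⟨h3, h4, ?_, ?_⟩
  · unfold beta1; positivity
  · unfold beta2; positivity

lemma aux_G1 (l : Filter ℝ) (hl : Tendsto (fun y : ℝ => |y|) l atTop) (e : ℝ)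
    (he : ∀ᶠ y in l, y = e * |y|)
    (nu cd cs V : ℝ) (hV : 0 < V) (hVs : V < cs) (hsd : cs < cd) (σ : ℝ) :
    Tendsto (fun τ : ℝ => GG1 nu cd cs V ((σ : ℂ) + (τ : ℂ) * Complex.I)
        * ((beta2 cd cs V / beta1 cd cs V : ℝ) : ℂ)
          ^ (-(((σ : ℂ) + (τ : ℂ) * Complex.I) / 2))) l
      (nhds (e * (Complex.I * (((aD cd V) ^ 2 - (aS cs V) ^ 2)
        / (((aD cd V) ^ 2 - 1) * Real.sqrt (beta2 cd cs V)) : ℝ)))) := by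
  obtain ⟨h1, h2, hb1, hb2⟩ := aux_pos cd cs V hV hVs hsd
  have hM := (aux_M l hl e he nu σ (((aD cd V) ^ 2 - (aS cs V) ^ 2 : ℝ) : ℂ)
    ((nu : ℂ) * (((aS cs V) ^ 2 : ℝ) : ℂ))).const_mul
    ((2 * ((((aD cd V) ^ 2 - 1 : ℝ)) : ℂ) * (Real.sqrt (beta2 cd cs V) : ℂ))⁻¹)
  have n2 : ((((aD cd V) ^ 2 - 1 : ℝ)) : ℂ) ≠ 0 := by exact_mod_cast h2.ne'
  have ns : (Real.sqrt (beta2 cd cs V) : ℂ) ≠ 0 := by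
    exact_mod_cast (Real.sqrt_pos.2 hb2).ne'
  have nb1 : ((beta1 cd cs V : ℝ) : ℂ) ≠ 0 := by exact_mod_cast hb1.ne'
  have nb2 : ((beta2 cd cs V : ℝ) : ℂ) ≠ 0 := by exact_mod_cast hb2.ne'
  convert hM using 2 with τ
  · rw [aux_cpow _ _ hb1 hb2, GG1, bb1]
    generalize (σ : ℂ) + (τ : ℂ) * I = s
    have p1 : ((beta1 cd cs V : ℝ) : ℂ) ^ (s / 2) ≠ 0 := by simp [Complex.cpow_eq_zero_iff, nb1]
    have p2 : ((beta2 cd cs V : ℝ) : ℂ) ^ ((1 - s) / 2) ≠ 0 := by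
      simp [Complex.cpow_eq_zero_iff, nb2]
    generalize ((beta1 cd cs V : ℝ) : ℂ) ^ (s / 2) = B1 at *
    generalize ((beta2 cd cs V : ℝ) : ℂ) ^ ((1 - s) / 2) = B2 at *
    generalize ((((aD cd V) ^ 2 - 1 : ℝ)) : ℂ) = D at *
    field_simp
  · rw [Complex.ofReal_div, Complex.ofReal_mul]
    generalize ((((aD cd V) ^ 2 - 1 : ℝ)) : ℂ) = D at *
    field_simp

lemma aux_G2 (l : Filter ℝ) (hl : Tendsto (fun y : ℝ => |y|) l atTop) (e : ℝ)
    (he : ∀ᶠ y in l, y = e * |y|)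
    (nu cd cs V : ℝ) (hV : 0 < V) (hVs : V < cs) (hsd : cs < cd) (σ : ℝ) :
    Tendsto (fun τ : ℝ => GG2 nu cd cs V ((σ : ℂ) + (τ : ℂ) * Complex.I)
        * ((beta2 cd cs V / beta1 cd cs V : ℝ) : ℂ)
          ^ (((σ : ℂ) + (τ : ℂ) * Complex.I) / 2)) l
      (nhds (e * (Complex.I * (((aD cd V) ^ 2 - (aS cs V) ^ 2)
        / (((aS cs V) ^ 2 - 1) * Real.sqrt (beta1 cd cs V)) : ℝ)))) := by
  obtain ⟨h1, h2, hb1, hb2⟩ := aux_pos cd cs V hV hVs hsd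
  have hM := (aux_M l hl e he nu σ (((aD cd V) ^ 2 - (aS cs V) ^ 2 : ℝ) : ℂ)
    ((nu : ℂ) * (((aD cd V) ^ 2 - 2 * (aS cs V) ^ 2 : ℝ) : ℂ))).const_mul
    ((2 * ((((aS cs V) ^ 2 - 1 : ℝ)) : ℂ) * (Real.sqrt (beta1 cd cs V) : ℂ))⁻¹)
  have n2 : ((((aS cs V) ^ 2 - 1 : ℝ)) : ℂ) ≠ 0 := by exact_mod_cast h1.ne'
  have ns : (Real.sqrt (beta1 cd cs V) : ℂ) ≠ 0 := by
    exact_mod_cast (Real.sqrt_pos.2 hb1).ne'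
  have nb1 : ((beta1 cd cs V : ℝ) : ℂ) ≠ 0 := by exact_mod_cast hb1.ne'
  have nb2 : ((beta2 cd cs V : ℝ) : ℂ) ≠ 0 := by exact_mod_cast hb2.ne'
  convert hM using 2 with τ
  · rw [aux_cpow' _ _ hb1 hb2, GG2, bb2]
    generalize (σ : ℂ) + (τ : ℂ) * I = s
    have p1 : ((beta2 cd cs V : ℝ) : ℂ) ^ (s / 2) ≠ 0 := by simp [Complex.cpow_eq_zero_iff, nb2]
    have p2 : ((beta1 cd cs V : ℝ) : ℂ) ^ ((1 - s) / 2) ≠ 0 := by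
      simp [Complex.cpow_eq_zero_iff, nb1]
    generalize ((beta2 cd cs V : ℝ) : ℂ) ^ (s / 2) = B1 at *
    generalize ((beta1 cd cs V : ℝ) : ℂ) ^ ((1 - s) / 2) = B2 at *
    generalize ((((aS cs V) ^ 2 - 1 : ℝ)) : ℂ) = D at *
    field_simp
  · rw [Complex.ofReal_div, Complex.ofReal_mul]
    generalize ((((aS cs V) ^ 2 - 1 : ℝ)) : ℂ) = D at *
    field_simp

theorem G_oscillation_asymptotics
    (nu cd cs V : ℝ) (hnu0 : 0 < nu) (hnu1 : nu < 1)
    (hV : 0 < V) (hVs : V < cs) (hsd : cs < cd) (σ : ℝ) :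
    Tendsto (fun τ : ℝ => GG1 nu cd cs V ((σ : ℂ) + (τ : ℂ) * Complex.I)
        * ((beta2 cd cs V / beta1 cd cs V : ℝ) : ℂ)
          ^ (-(((σ : ℂ) + (τ : ℂ) * Complex.I) / 2))) atTop
      (nhds (Complex.I * (((aD cd V) ^ 2 - (aS cs V) ^ 2)
        / (((aD cd V) ^ 2 - 1) * Real.sqrt (beta2 cd cs V)) : ℝ))) ∧
    Tendsto (fun τ : ℝ => GG1 nu cd cs V ((σ : ℂ) + (τ : ℂ) * Complex.I)
        * ((beta2 cd cs V / beta1 cd cs V : ℝ) : ℂ)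
          ^ (-(((σ : ℂ) + (τ : ℂ) * Complex.I) / 2))) atBot
      (nhds (-(Complex.I * (((aD cd V) ^ 2 - (aS cs V) ^ 2)
        / (((aD cd V) ^ 2 - 1) * Real.sqrt (beta2 cd cs V)) : ℝ)))) ∧
    Tendsto (fun τ : ℝ => GG2 nu cd cs V ((σ : ℂ) + (τ : ℂ) * Complex.I)
        * ((beta2 cd cs V / beta1 cd cs V : ℝ) : ℂ)
          ^ (((σ : ℂ) + (τ : ℂ) * Complex.I) / 2)) atTop
      (nhds (Complex.I * (((aD cd V) ^ 2 - (aS cs V) ^ 2)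
        / (((aS cs V) ^ 2 - 1) * Real.sqrt (beta1 cd cs V)) : ℝ))) ∧
    Tendsto (fun τ : ℝ => GG2 nu cd cs V ((σ : ℂ) + (τ : ℂ) * Complex.I)
        * ((beta2 cd cs V / beta1 cd cs V : ℝ) : ℂ)
          ^ (((σ : ℂ) + (τ : ℂ) * Complex.I) / 2)) atBot
      (nhds (-(Complex.I * (((aD cd V) ^ 2 - (aS cs V) ^ 2)
        / (((aS cs V) ^ 2 - 1) * Real.sqrt (beta1 cd cs V)) : ℝ)))) := by
  have hT : ∀ᶠ y : ℝ in atTop, y = (1 : ℝ) * |y| := by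
    filter_upwards [eventually_ge_atTop 0] with y hy
    rw [abs_of_nonneg hy, one_mul]
  have hB : ∀ᶠ y : ℝ in atBot, y = (-1 : ℝ) * |y| := by
    filter_upwards [eventually_le_atBot 0] with y hy
    rw [abs_of_nonpos hy]; ring
  refine ⟨?_, ?_, ?_, ?_⟩
  · simpa only [Complex.ofReal_one, one_mul] using
      aux_G1 atTop tendsto_abs_atTop_atTop 1 hT nu cd cs V hV hVs hsd σ
  · simpa only [Complex.ofReal_one, Complex.ofReal_neg, neg_mul, one_mul] using
      aux_G1 atBot tendsto_abs_atBot_atTop (-1) hB nu cd cs V hV hVs hsd σ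
  · simpa only [Complex.ofReal_one, one_mul] using
      aux_G2 atTop tendsto_abs_atTop_atTop 1 hT nu cd cs V hV hVs hsd σ
  · simpa only [Complex.ofReal_one, Complex.ofReal_neg, neg_mul, one_mul] using
      aux_G2 atBot tendsto_abs_atBot_atTop (-1) hB nu cd cs V hV hVs hsd σ

end
end

section
/- Let 0 < ν < 1, let s ∈ ℂ with 0 < Re s < ν, and let ξ ∈ ℝ with ξ ≠ 0. Then the improper integral lim_{R→∞} ∫_{−R}^{R} e^{iαξ} |α|^{ν−s−1} dα exists and equals 2·Γ(ν−s)·cos(π(ν−s)/2)·|ξ|^{s−ν}. -/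
open MeasureTheory Filter Complex

lemma fc_bound1 (w : ℂ) (hw : 0 ≤ w.re) : ‖1 - Complex.exp (-w)‖ ≤ 2 := by
  calc ‖1 - Complex.exp (-w)‖ ≤ ‖(1:ℂ)‖ + ‖Complex.exp (-w)‖ := norm_sub_le _ _
    _ ≤ 1 + 1 := by
      gcongr
      · simp
      · rw [Complex.norm_exp]; simpa using hw
    _ = 2 := by norm_num

lemma fc_bound2 (w : ℂ) (hw : 0 ≤ w.re) : ‖1 - Complex.exp (-w)‖ ≤ ‖w‖ := by
  have := norm_image_sub_le_of_norm_deriv_le_segment_01' (f := fun x : ℝ => Complex.exp (-(x * w)))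
    (f' := fun x : ℝ => Complex.exp (-(x * w)) * (-(1 * w))) (C := ‖w‖) ?_ ?_
  · rw [norm_sub_rev]; simpa using this
  · intro x hx
    exact ((((Complex.ofRealCLM.hasDerivAt (x := x)).mul_const w).neg).cexp).hasDerivWithinAt
  · intro x hx
    rw [norm_mul, Complex.norm_exp]
    have : Real.exp (-(x * w)).re ≤ 1 := by
      rw [Real.exp_le_one_iff]
      simp only [neg_re, re_ofReal_mul]
      have := mul_nonneg hx.1 hw
      linarith
    calc _ ≤ 1 * ‖-(1*w)‖ := by gcongr
      _ = _ := by simp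

lemma fc_dom (a : ℂ) (ha0 : 0 < a.re) (ha1 : a.re < 1) (M : ℝ) :
    ∃ b : ℝ → ℝ, IntegrableOn b (Set.Ioi 0) ∧ ∀ z : ℂ, 0 ≤ z.re → ‖z‖ ≤ M → ∀ t : ℝ, 0 < t →
      ‖(1 - Complex.exp (-(z * t))) * (t : ℂ) ^ (a - 2)‖ ≤ b t := by
  refine ⟨fun t => if t ≤ 1 then M * t ^ (a.re - 1) else 2 * t ^ (a.re - 2), ?_, ?_⟩
  · rw [← Set.Ioc_union_Ioi_eq_Ioi (zero_le_one (α := ℝ))]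
    apply IntegrableOn.union
    · have h : IntegrableOn (fun t : ℝ => M * t ^ (a.re - 1)) (Set.Ioc 0 1) := by
        apply Integrable.const_mul
        exact (intervalIntegrable_iff_integrableOn_Ioc_of_le zero_le_one).1
          (intervalIntegral.intervalIntegrable_rpow' (by linarith))
      refine h.congr_fun (fun t ht => ?_) measurableSet_Ioc
      simp [ht.2]
    · have h : IntegrableOn (fun t : ℝ => 2 * t ^ (a.re - 2)) (Set.Ioi 1) := by
        apply Integrable.const_mul
        exact integrableOn_Ioi_rpow_of_lt (by linarith) one_pos
      refine h.congr_fun (fun t ht => ?_) measurableSet_Ioi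
      have : ¬ t ≤ 1 := not_le.2 ht
      simp [this]
  · intro z hz hM t ht
    have hre : 0 ≤ (z * t).re := by
      rw [re_mul_ofReal]; positivity
    rw [norm_mul, Complex.norm_cpow_eq_rpow_re_of_pos ht]
    have hr : (a - 2).re = a.re - 2 := by simp
    rw [hr]
    dsimp only
    split_ifs with h
    · have : t ^ (a.re - 1) = t * t ^ (a.re - 2) := by
        rw [← Real.rpow_one_add' ht.le (by linarith)]; congr 1; ring
      rw [this, ← mul_assoc]
      gcongr
      refine (fc_bound2 _ hre).trans ?_
      rw [norm_mul, norm_real, Real.norm_of_nonneg ht.le]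
      gcongr
    · gcongr
      exact fc_bound1 _ hre

lemma fc_meas (a z : ℂ) : AEStronglyMeasurable
    (fun t : ℝ => (1 - Complex.exp (-(z * t))) * (t : ℂ) ^ (a - 2)) (volume.restrict (Set.Ioi 0)) := by
  refine ContinuousOn.aestronglyMeasurable (fun t ht => ?_) measurableSet_Ioi
  refine ContinuousAt.continuousWithinAt ?_
  have : ContinuousAt (fun t : ℝ => (t : ℂ) ^ (a - 2)) t :=
    continuousAt_ofReal_cpow_const _ _ (Or.inr (ne_of_gt ht))
  fun_prop

lemma fc_int (a z : ℂ) (ha0 : 0 < a.re) (ha1 : a.re < 1) (hz : 0 ≤ z.re) :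
    IntegrableOn (fun t : ℝ => (1 - Complex.exp (-(z * t))) * (t : ℂ) ^ (a - 2)) (Set.Ioi 0) := by
  obtain ⟨b, hb, h⟩ := fc_dom a ha0 ha1 ‖z‖
  refine hb.mono' (fc_meas a z) ?_
  filter_upwards [ae_restrict_mem measurableSet_Ioi] with t ht using h z hz le_rfl t ht

lemma fc_intv (a z : ℂ) (ha0 : 0 < a.re) (x y : ℝ) :
    IntervalIntegrable (fun t : ℝ => Complex.exp (-(z * t)) * (t : ℂ) ^ (a - 1)) volume x y := by
  refine IntervalIntegrable.continuousOn_mul (f := fun t : ℝ => (t : ℂ) ^ (a - 1)) ?_ ?_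
  · exact intervalIntegral.intervalIntegrable_cpow' (by simpa using ha0)
  · fun_prop

/-- integration by parts -/
lemma fc_parts (a z : ℂ) (ha0 : 0 < a.re) (ha1 : a.re < 1) (hz : 0 ≤ z.re) (hz0 : z ≠ 0)
    (R : ℝ) (hR : 0 < R) :
    ∫ t in (0:ℝ)..R, Complex.exp (-(z * t)) * (t : ℂ) ^ (a - 1) =
      (1 - Complex.exp (-(z * R))) / z * (R : ℂ) ^ (a - 1) +
      (1 - a) / z * ∫ t in (0:ℝ)..R, (1 - Complex.exp (-(z * t))) * (t : ℂ) ^ (a - 2) := by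
  have ha : a - 1 ≠ 0 := by
    intro h
    have := congrArg Complex.re h
    simp at this; linarith
  have hd : ∀ t ∈ Set.Ioi (0:ℝ), HasDerivAt
      (fun t : ℝ => (1 - Complex.exp (-(z * t))) / z * (t : ℂ) ^ (a - 1))
      (Complex.exp (-(z * t)) * (t : ℂ) ^ (a - 1) -
        (1 - a) / z * ((1 - Complex.exp (-(z * t))) * (t : ℂ) ^ (a - 2))) t := by
    intro t ht
    have h1 := hasDerivAt_ofReal_cpow_const (ne_of_gt ht) ha
    have h2 := ((((((Complex.ofRealCLM.hasDerivAt (x := t)).const_mul z).neg).cexp).const_sub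
      1).div_const z).mul h1
    refine h2.congr_deriv ?_
    simp only [ofRealCLM_apply, ofReal_one, Pi.neg_apply]
    rw [show a - 1 - 1 = a - 2 by ring]
    field_simp
    ring
  have hi2 : IntervalIntegrable
      (fun t : ℝ => (1 - Complex.exp (-(z * t))) * (t : ℂ) ^ (a - 2)) volume 0 R :=
    (intervalIntegrable_iff_integrableOn_Ioc_of_le hR.le).2
      ((fc_int a z ha0 ha1 hz).mono_set Set.Ioc_subset_Ioi_self)
  have hi1 := fc_intv a z ha0 0 R
  have key := intervalIntegral.integral_eq_sub_of_hasDerivAt_of_tendsto hR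
    (fun t ht => hd t ht.1) (hi1.sub (hi2.const_mul ((1 - a) / z))) (fa := 0)
    (fb := (1 - Complex.exp (-(z * R))) / z * (R : ℂ) ^ (a - 1)) ?_ ?_
  · rw [intervalIntegral.integral_sub hi1 (hi2.const_mul _),
      intervalIntegral.integral_const_mul] at key
    linear_combination key
  · have hlim : Tendsto (fun t : ℝ => t ^ a.re) (nhdsWithin 0 (Set.Ioi 0)) (nhds 0) := by
      have := (Real.continuousAt_rpow_const 0 a.re (Or.inr ha0.le)).tendsto
      rw [Real.zero_rpow ha0.ne'] at this
      exact this.mono_left nhdsWithin_le_nhds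
    refine squeeze_zero_norm' ?_ hlim
    filter_upwards [self_mem_nhdsWithin] with t ht
    have ht : 0 < t := ht
    rw [norm_mul, norm_div, Complex.norm_cpow_eq_rpow_re_of_pos ht]
    have hr : t ^ a.re = t * t ^ (a - 1).re := by
      rw [← Real.rpow_one_add' ht.le (by simp; linarith)]; simp
    rw [hr]
    gcongr
    rw [div_le_iff₀ (norm_pos_iff.2 hz0)]
    have hre : 0 ≤ (z * t).re := by
      rw [re_mul_ofReal]; positivity
    refine (fc_bound2 _ hre).trans ?_
    rw [norm_mul, norm_real, Real.norm_of_nonneg ht.le, mul_comm]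
  · exact (hd R hR).continuousAt.tendsto.mono_left nhdsWithin_le_nhds

lemma fc_lim (a z : ℂ) (ha0 : 0 < a.re) (ha1 : a.re < 1) (hz : 0 ≤ z.re) (hz0 : z ≠ 0) :
    Tendsto (fun R : ℝ => ∫ t in (0:ℝ)..R, Complex.exp (-(z * t)) * (t : ℂ) ^ (a - 1)) atTop
      (nhds ((1 - a) / z * ∫ t in Set.Ioi (0:ℝ),
        (1 - Complex.exp (-(z * t))) * (t : ℂ) ^ (a - 2))) := by
  have h1 := (intervalIntegral_tendsto_integral_Ioi 0 (fc_int a z ha0 ha1 hz)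
    tendsto_id).const_mul ((1 - a) / z)
  have h2 : Tendsto (fun R : ℝ => (1 - Complex.exp (-(z * R))) / z * (R : ℂ) ^ (a - 1)) atTop
      (nhds 0) := by
    have hlim : Tendsto (fun R : ℝ => 2 / ‖z‖ * R ^ (-(1 - a.re))) atTop (nhds 0) := by
      simpa using (tendsto_rpow_neg_atTop (by linarith : 0 < 1 - a.re)).const_mul (2 / ‖z‖)
    refine squeeze_zero_norm' ?_ hlim
    filter_upwards [eventually_gt_atTop 0] with t ht
    rw [norm_mul, norm_div, Complex.norm_cpow_eq_rpow_re_of_pos ht]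
    have hr : (a - 1).re = -(1 - a.re) := by simp
    rw [hr]
    have hre : 0 ≤ (z * t).re := by
      rw [re_mul_ofReal]; positivity
    gcongr
    exact fc_bound1 _ hre
  have h3 := h2.add h1
  rw [zero_add] at h3
  refine h3.congr' ?_
  filter_upwards [eventually_gt_atTop 0] with R hR
  rw [fc_parts a z ha0 ha1 hz hz0 R hR]; rfl

lemma fc_Hint (a z : ℂ) (ha0 : 0 < a.re) (hz : 0 < z.re) :
    IntegrableOn (fun t : ℝ => Complex.exp (-(z * t)) * (t : ℂ) ^ (a - 1)) (Set.Ioi 0) := by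
  have h := integrableOn_rpow_mul_exp_neg_mul_rpow (p := 1) (s := a.re - 1) (b := z.re)
    (by linarith) one_pos hz
  refine h.mono' ?_ ?_
  · refine ContinuousOn.aestronglyMeasurable (fun t ht => ?_) measurableSet_Ioi
    refine ContinuousAt.continuousWithinAt ?_
    have : ContinuousAt (fun t : ℝ => (t : ℂ) ^ (a - 1)) t :=
      continuousAt_ofReal_cpow_const _ _ (Or.inr (ne_of_gt ht))
    fun_prop
  · filter_upwards [ae_restrict_mem measurableSet_Ioi] with t ht
    rw [norm_mul, Complex.norm_cpow_eq_rpow_re_of_pos ht, Complex.norm_exp, mul_comm]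
    simp

lemma fc_Hderiv (a z : ℂ) (ha0 : 0 < a.re) (hz : 0 < z.re) :
    DifferentiableAt ℂ (fun z : ℂ => ∫ t in Set.Ioi (0:ℝ),
      Complex.exp (-(z * t)) * (t : ℂ) ^ (a - 1)) z := by
  have hm : ∀ (w b : ℂ), AEStronglyMeasurable (fun t : ℝ => Complex.exp (-(w * t)) * (t : ℂ) ^ b)
      (volume.restrict (Set.Ioi 0)) := by
    intro w b
    refine ContinuousOn.aestronglyMeasurable (fun t ht => ?_) measurableSet_Ioi
    refine ContinuousAt.continuousWithinAt ?_
    have : ContinuousAt (fun t : ℝ => (t : ℂ) ^ b) t :=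
      continuousAt_ofReal_cpow_const _ _ (Or.inr (ne_of_gt ht))
    fun_prop
  have hb := integrableOn_rpow_mul_exp_neg_mul_rpow (p := 1) (s := a.re) (b := z.re / 2)
    (by linarith) one_pos (by linarith)
  have hcont : IsOpen {w : ℂ | z.re / 2 < w.re} := isOpen_lt continuous_const continuous_re
  have := hasDerivAt_integral_of_dominated_loc_of_deriv_le (μ := volume.restrict (Set.Ioi (0:ℝ)))
    (F := fun (z : ℂ) (t : ℝ) => Complex.exp (-(z * t)) * (t : ℂ) ^ (a - 1))
    (F' := fun (z : ℂ) (t : ℝ) => - (Complex.exp (-(z * t)) * (t : ℂ) ^ a)) (x₀ := z)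
    (bound := fun t : ℝ => t ^ a.re * Real.exp (-(z.re / 2) * t ^ (1:ℝ)))
    (hcont.mem_nhds (show z.re / 2 < z.re by linarith))
    (Eventually.of_forall fun w => hm w _) (fc_Hint a z ha0 hz) (hm z a).neg ?_ hb ?_
  · exact this.2.differentiableAt
  · filter_upwards [ae_restrict_mem measurableSet_Ioi] with t ht w hw
    have ht : 0 < t := ht
    have hw : z.re / 2 < w.re := hw
    rw [norm_neg, norm_mul, Complex.norm_cpow_eq_rpow_re_of_pos ht, Complex.norm_exp, mul_comm]
    simp only [neg_re, re_mul_ofReal, Real.rpow_one, neg_mul]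
    gcongr
  · filter_upwards [ae_restrict_mem measurableSet_Ioi] with t ht w hw
    have ht : 0 < t := ht
    have h1 := (((hasDerivAt_id w).mul_const (t:ℂ)).neg).cexp.mul_const ((t : ℂ) ^ (a - 1))
    refine h1.congr_deriv ?_
    have : (t : ℂ) ^ a = t * (t : ℂ) ^ (a - 1) := by
      rw [Complex.cpow_sub _ _ (ofReal_ne_zero.2 ht.ne'), cpow_one]
      field_simp [ofReal_ne_zero.2 ht.ne']
    rw [this]; simp; ring

lemma fc_H (a z : ℂ) (ha0 : 0 < a.re) (hz : 0 < z.re) :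
    ∫ t in Set.Ioi (0:ℝ), Complex.exp (-(z * t)) * (t : ℂ) ^ (a - 1) = Gamma a * z ^ (-a) := by
  have ho : IsOpen {w : ℂ | 0 < w.re} := isOpen_lt continuous_const continuous_re
  have hpre : IsPreconnected {w : ℂ | 0 < w.re} := (convex_halfSpace_re_gt 0).isPreconnected
  have hf : AnalyticOnNhd ℂ (fun z : ℂ => ∫ t in Set.Ioi (0:ℝ),
      Complex.exp (-(z * t)) * (t : ℂ) ^ (a - 1)) {w : ℂ | 0 < w.re} :=
    DifferentiableOn.analyticOnNhd
      (fun w hw => (fc_Hderiv a w ha0 hw).differentiableWithinAt) ho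
  have hg : AnalyticOnNhd ℂ (fun z : ℂ => Gamma a * z ^ (-a)) {w : ℂ | 0 < w.re} := by
    refine DifferentiableOn.analyticOnNhd (fun w hw => ?_) ho
    have : w ∈ slitPlane := Or.inl hw
    exact ((differentiableAt_id.cpow_const this).const_mul _).differentiableWithinAt
  have hreal : ∀ r : ℝ, 0 < r → ∫ t in Set.Ioi (0:ℝ), Complex.exp (-((r:ℂ) * t)) * (t : ℂ) ^ (a - 1)
      = Gamma a * (r:ℂ) ^ (-a) := by
    intro r hr
    have := Complex.integral_cpow_mul_exp_neg_mul_Ioi ha0 hr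
    simp_rw [mul_comm (Complex.exp _)]
    rw [this, mul_comm, one_div, cpow_neg, inv_cpow]
    rw [arg_ofReal_of_nonneg hr.le]; exact Real.pi_pos.ne
  refine hf.eqOn_of_preconnected_of_frequently_eq hg hpre (z₀ := 1) (by simp) ?_ hz
  have ht : Tendsto (fun n : ℕ => (((1 + 1 / ((n:ℝ) + 1) : ℝ)) : ℂ)) atTop
      (nhdsWithin 1 {1}ᶜ) := by
    refine tendsto_nhdsWithin_iff.2 ⟨?_, ?_⟩
    · have := (tendsto_one_div_add_atTop_nhds_zero_nat (𝕜 := ℝ)).const_add 1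
      rw [add_zero] at this
      exact_mod_cast (continuous_ofReal.tendsto 1).comp this
    · refine Eventually.of_forall fun n => ?_
      simp only [Set.mem_compl_iff, Set.mem_singleton_iff]
      have : 0 < 1 / ((n:ℝ) + 1) := by positivity
      intro h
      have h' : (1 + 1 / ((n:ℝ) + 1) : ℝ) = 1 := by exact_mod_cast congrArg Complex.re h
      linarith
  refine ht.frequently (Eventually.frequently (Eventually.of_forall fun n => ?_))
  exact hreal _ (by positivity)

lemma fc_main (a z : ℂ) (ha0 : 0 < a.re) (ha1 : a.re < 1) (hz : 0 ≤ z.re) (hz0 : z ≠ 0) :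
    Tendsto (fun R : ℝ => ∫ t in (0:ℝ)..R, Complex.exp (-(z * t)) * (t : ℂ) ^ (a - 1)) atTop
      (nhds (Gamma a * z ^ (-a))) := by
  have hslit : z ∈ slitPlane := by
    rw [mem_slitPlane_iff]
    by_contra h
    push Not at h
    exact hz0 (Complex.ext (le_antisymm h.1 hz) h.2)
  have hpos : ∀ w : ℂ, 0 < w.re → (1 - a) / w * ∫ t in Set.Ioi (0:ℝ),
        (1 - Complex.exp (-(w * t))) * (t : ℂ) ^ (a - 2) = Gamma a * w ^ (-a) := by
    intro w hw
    have hw0 : w ≠ 0 := by rintro rfl; simp at hw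
    rw [← fc_H a w ha0 hw]
    exact tendsto_nhds_unique (fc_lim a w ha0 ha1 hw.le hw0)
      (intervalIntegral_tendsto_integral_Ioi 0 (fc_Hint a w ha0 hw) tendsto_id)
  have h := fc_lim a z ha0 ha1 hz hz0
  suffices (1 - a) / z * ∫ t in Set.Ioi (0:ℝ),
        (1 - Complex.exp (-(z * t))) * (t : ℂ) ^ (a - 2) = Gamma a * z ^ (-a) by
    rwa [this] at h
  obtain ⟨b, hb, hbd⟩ := fc_dom a ha0 ha1 (‖z‖ + 1)
  have heps : Tendsto (fun n : ℕ => z + ((1 / ((n:ℝ) + 1) : ℝ) : ℂ)) atTop (nhds z) := by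
    have := (tendsto_one_div_add_atTop_nhds_zero_nat (𝕜 := ℝ))
    have := ((continuous_ofReal.tendsto 0).comp this).const_add z
    simpa using this
  have hre : ∀ n : ℕ, 0 < (z + ((1 / ((n:ℝ) + 1) : ℝ) : ℂ)).re := by
    intro n
    rw [add_re, ofReal_re]; positivity
  have hK : Tendsto (fun n : ℕ => ∫ t in Set.Ioi (0:ℝ),
      (1 - Complex.exp (-((z + ((1 / ((n:ℝ) + 1) : ℝ) : ℂ)) * t))) * (t : ℂ) ^ (a - 2)) atTop
      (nhds (∫ t in Set.Ioi (0:ℝ), (1 - Complex.exp (-(z * t))) * (t : ℂ) ^ (a - 2))) := by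
    refine tendsto_integral_filter_of_dominated_convergence b
      (Eventually.of_forall fun n => fc_meas a _) ?_ hb ?_
    · refine Eventually.of_forall fun n => ?_
      filter_upwards [ae_restrict_mem measurableSet_Ioi] with t ht
      refine hbd _ (hre n).le ?_ t ht
      refine (norm_add_le _ _).trans ?_
      gcongr
      rw [norm_real, Real.norm_of_nonneg (by positivity)]
      rw [div_le_one (by positivity)]
      linarith [(Nat.cast_nonneg n : (0:ℝ) ≤ n)]
    · refine Eventually.of_forall fun t => ?_
      have hc : Continuous fun w : ℂ => (1 - Complex.exp (-(w * t))) * (t : ℂ) ^ (a - 2) := by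
        fun_prop
      exact (hc.tendsto z).comp heps
  have hL := ((tendsto_const_nhds (x := 1 - a)).div heps hz0).mul hK
  have hRt : Tendsto (fun n : ℕ => Gamma a * (z + ((1 / ((n:ℝ) + 1) : ℝ) : ℂ)) ^ (-a)) atTop
      (nhds (Gamma a * z ^ (-a))) :=
    (((continuousAt_cpow_const hslit).tendsto).comp heps).const_mul _
  exact tendsto_nhds_unique (hL.congr fun n => hpos _ (hre n)) hRt

lemma fc_pow (a : ℂ) (r : ℝ) (hr : 0 < r) :
    (I * r) ^ (-a) + (-(I * r)) ^ (-a) = 2 * Complex.cos (↑Real.pi * a / 2) * (r : ℂ) ^ (-a) := by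
  have hr0 : (r : ℂ) ≠ 0 := ofReal_ne_zero.2 hr.ne'
  have e1 : (I * r) ^ (-a) = Complex.exp (-(↑Real.pi * a / 2 * I)) * (r : ℂ) ^ (-a) := by
    rw [mul_comm, cpow_def_of_ne_zero (mul_ne_zero hr0 I_ne_zero), cpow_def_of_ne_zero hr0,
      Complex.log_ofReal_mul hr I_ne_zero, log_I, ← Complex.exp_add, ofReal_log hr.le]
    congr 1; ring
  have e2 : (-(I * r)) ^ (-a) = Complex.exp (↑Real.pi * a / 2 * I) * (r : ℂ) ^ (-a) := by
    have hn : -I ≠ 0 := neg_ne_zero.2 I_ne_zero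
    rw [show -(I * (r:ℂ)) = r * (-I) by ring, cpow_def_of_ne_zero (mul_ne_zero hr0 hn),
      cpow_def_of_ne_zero hr0,
      Complex.log_ofReal_mul hr hn, log_neg_I, ← Complex.exp_add, ofReal_log hr.le]
    congr 1; ring
  rw [e1, e2, Complex.cos]
  ring_nf

lemma fc_pow_abs (a : ℂ) (ξ : ℝ) (hξ : ξ ≠ 0) :
    (I * ξ) ^ (-a) + (-(I * ξ)) ^ (-a) =
      2 * Complex.cos (↑Real.pi * a / 2) * ((|ξ| : ℝ) : ℂ) ^ (-a) := by
  rcases lt_or_gt_of_ne hξ with h | h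
  · have := fc_pow a (-ξ) (neg_pos.2 h)
    rw [abs_of_neg h, ← this]
    push_cast
    rw [mul_neg, neg_neg, add_comm]
  · rw [abs_of_pos h, fc_pow a ξ h]

theorem fourier_cos_power_integral (nu : ℝ) (hnu0 : 0 < nu) (hnu1 : nu < 1)
    (s : ℂ) (hs0 : 0 < s.re) (hs1 : s.re < nu) (ξ : ℝ) (hξ : ξ ≠ 0) :
    Tendsto (fun R : ℝ => ∫ α in (-R)..R,
        Complex.exp (Complex.I * (α : ℂ) * (ξ : ℂ)) * ((|α| : ℝ) : ℂ) ^ ((nu : ℂ) - s - 1))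
      atTop
      (nhds (2 * Complex.Gamma ((nu : ℂ) - s)
        * Complex.cos (↑Real.pi * ((nu : ℂ) - s) / 2) * ((|ξ| : ℝ) : ℂ) ^ (s - (nu : ℂ)))) := by
  rw [← neg_sub (nu : ℂ) s]
  have ha0 : 0 < ((nu : ℂ) - s).re := by simp; linarith
  have ha1 : ((nu : ℂ) - s).re < 1 := by simp; linarith
  generalize (nu : ℂ) - s = a at *
  have hz0 : I * (ξ : ℂ) ≠ 0 := mul_ne_zero I_ne_zero (ofReal_ne_zero.2 hξ)
  have h1 := fc_main a (I * ξ) ha0 ha1 (by simp) hz0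
  have h2 := fc_main a (-(I * ξ)) ha0 ha1 (by simp) (neg_ne_zero.2 hz0)
  have h := h1.add h2
  rw [← mul_add, fc_pow_abs a ξ hξ] at h
  rw [show 2 * Gamma a * Complex.cos (↑Real.pi * a / 2) * ((|ξ| : ℝ) : ℂ) ^ (-a) =
    Gamma a * (2 * Complex.cos (↑Real.pi * a / 2) * ((|ξ| : ℝ) : ℂ) ^ (-a)) by ring]
  refine h.congr' ?_
  filter_upwards [eventually_gt_atTop 0] with R hR
  have c1 : Set.EqOn (fun t : ℝ => Complex.exp (-(I * ξ * t)) * (t : ℂ) ^ (a - 1))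
      (fun t : ℝ => Complex.exp (I * ((-t : ℝ) : ℂ) * ξ) * ((|(-t)| : ℝ) : ℂ) ^ (a - 1))
      (Set.uIcc 0 R) := by
    intro t ht
    rw [Set.uIcc_of_le hR.le] at ht
    simp only [abs_neg, abs_of_nonneg ht.1, ofReal_neg]
    congr 2; ring
  have c2 : Set.EqOn (fun t : ℝ => Complex.exp (-(-(I * ξ) * t)) * (t : ℂ) ^ (a - 1))
      (fun t : ℝ => Complex.exp (I * (t : ℂ) * ξ) * ((|t| : ℝ) : ℂ) ^ (a - 1))
      (Set.uIcc 0 R) := by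
    intro t ht
    rw [Set.uIcc_of_le hR.le] at ht
    simp only [abs_of_nonneg ht.1]
    congr 2; ring
  have i1 := (fc_intv a (I * ξ) ha0 0 R).congr (fun t ht => c1 (Set.uIoc_subset_uIcc ht))
  have i2 := (fc_intv a (-(I * ξ)) ha0 0 R).congr (fun t ht => c2 (Set.uIoc_subset_uIcc ht))
  have i3 : IntervalIntegrable
      (fun t : ℝ => Complex.exp (I * (t : ℂ) * ξ) * ((|t| : ℝ) : ℂ) ^ (a - 1)) volume (-R) 0 := by
    have := (IntervalIntegrable.iff_comp_neg (f := fun t : ℝ =>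
      Complex.exp (I * (t : ℂ) * ξ) * ((|t| : ℝ) : ℂ) ^ (a - 1)) (a := -R) (b := 0)).2
    rw [neg_neg, neg_zero] at this
    exact this i1.symm
  rw [intervalIntegral.integral_congr c1, intervalIntegral.integral_congr c2,
    ← intervalIntegral.integral_add_adjacent_intervals i3 i2,
    intervalIntegral.integral_comp_neg (fun t : ℝ =>
      Complex.exp (I * (t : ℂ) * ξ) * ((|t| : ℝ) : ℂ) ^ (a - 1)), neg_zero]
end

section
/- Let x ∈ ℝ with 0 < x < 1 and let δ ∈ ℝ with δ ≠ 0. Then the series Σ_{j=0}^{∞} (−1)^j x^j/(iδ − j) converges absolutely and ∫₀¹ y^{iδ}/(y + x) dy = πi·x^{iδ}/sinh(πδ) + Σ_{j=0}^{∞} (−1)^j x^j/(iδ − j). -/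
open MeasureTheory Filter Complex

lemma aux_subst (x : ℝ) (hx0 : 0 < x) (s : ℂ) :
    ∫ t in (0:ℝ)..(1 / (1 + x)), (t : ℂ) ^ s * (1 - (t : ℂ)) ^ (-s)
      = x * (x : ℂ) ^ (-s) * ∫ y in (0:ℝ)..1, (y : ℂ) ^ s / ((y : ℂ) + x) ^ 2 := by
  have himg : (fun y : ℝ => y / (y + x)) '' Set.Ioo 0 1 = Set.Ioo 0 (1 / (1 + x)) := by
    ext t
    simp only [Set.mem_image, Set.mem_Ioo]
    constructor
    · rintro ⟨y, ⟨h0, h1⟩, rfl⟩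
      refine ⟨by positivity, ?_⟩
      rw [div_lt_div_iff₀ (by positivity) (by positivity)]
      nlinarith
    · rintro ⟨h0, h1⟩
      rw [lt_div_iff₀ (by positivity)] at h1
      have ht : 0 < 1 - t := by nlinarith
      refine ⟨x * t / (1 - t), ⟨by positivity, ?_⟩, ?_⟩
      · rw [div_lt_one ht]; nlinarith
      · have : x * t / (1 - t) + x = x / (1 - t) := by field_simp; ring
        rw [this]; field_simp
  have hd : ∀ y ∈ Set.Ioo (0:ℝ) 1,
      HasDerivWithinAt (fun y : ℝ => y / (y + x)) (x / (y + x) ^ 2) (Set.Ioo 0 1) y := by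
    intro y hy
    have hy0 := hy.1
    have := (hasDerivAt_id y).div ((hasDerivAt_id y).add_const x)
      (by simp only [id]; positivity)
    convert! this.hasDerivWithinAt using 1
    simp
  have hinj : Set.InjOn (fun y : ℝ => y / (y + x)) (Set.Ioo 0 1) := by
    intro a ha b hb h
    have ha0 := ha.1
    have hb0 := hb.1
    simp only at h
    rw [div_eq_div_iff (by positivity) (by positivity)] at h
    have : x * (a - b) = 0 := by linarith
    rcases mul_eq_zero.1 this with h | h <;> linarith
  rw [intervalIntegral.integral_of_le (by positivity), integral_Ioc_eq_integral_Ioo, ← himg,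
    integral_image_eq_integral_abs_deriv_smul measurableSet_Ioo hd hinj,
    intervalIntegral.integral_of_le zero_le_one, integral_Ioc_eq_integral_Ioo,
    ← integral_const_mul]
  refine setIntegral_congr_fun measurableSet_Ioo ?_
  intro y hy
  have hy0 := hy.1
  have hyx : 0 < y + x := by positivity
  have hyc : ((y + x : ℝ) : ℂ) ≠ 0 := by exact_mod_cast hyx.ne'
  have h1 : (1 : ℂ) - ((y / (y + x) : ℝ) : ℂ) = (x : ℂ) / ((y + x : ℝ) : ℂ) := by
    push_cast at hyc ⊢
    field_simp; ring
  simp only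
  rw [h1, abs_of_pos (by positivity), ofReal_div, div_cpow_ofReal_nonneg hy0.le hyx.le,
    div_cpow_ofReal_nonneg hx0.le hyx.le, cpow_neg ((y + x : ℝ) : ℂ), real_smul]
  have h2 : ((y + x : ℝ) : ℂ) ^ s ≠ 0 := by
    rw [Ne, cpow_eq_zero_iff]
    exact fun h => hyc h.1
  push_cast at hyc h2 ⊢
  field_simp

lemma aux_beta (x : ℝ) (hx0 : 0 < x) (s : ℂ) (hs : s.re = 0) (hs0 : s ≠ 0) :
    x * (x : ℂ) ^ (-s) * ((∫ y in (0:ℝ)..1, (y : ℂ) ^ s / ((y : ℂ) + x) ^ 2)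
      + ∫ u in (0:ℝ)..1, (u : ℂ) ^ (-s) / (1 + x * (u : ℂ)) ^ 2)
      = Real.pi * s / Complex.sin (Real.pi * s) := by
  have hB := betaIntegral_eq_Gamma_mul_div (1 + s) (1 - s) (by simp [hs]) (by simp [hs])
  have hI := betaIntegral_convergent (u := 1 + s) (v := 1 - s) (by simp [hs]) (by simp [hs])
  have e2 : (1 : ℂ) + s + (1 - s) = ((1 : ℕ) : ℂ) + 1 := by push_cast; ring
  rw [e2, Gamma_nat_eq_factorial, add_comm (1:ℂ) s, Gamma_add_one s hs0] at hB
  rw [mul_assoc, Gamma_mul_Gamma_one_sub, betaIntegral] at hB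
  simp only [add_sub_cancel_left, sub_sub_cancel_left, add_sub_cancel_right] at hB hI
  have hc0 : 0 ≤ 1 / (1 + x) := by positivity
  have hc1 : 1 / (1 + x) ≤ 1 := by rw [div_le_one (by positivity)]; linarith
  have hmem : 1 / (1 + x) ∈ Set.uIcc (0:ℝ) 1 := by rw [Set.uIcc_of_le zero_le_one]; exact ⟨hc0, hc1⟩
  rw [← intervalIntegral.integral_add_adjacent_intervals (b := 1 / (1 + x))
    (hI.mono_set (Set.uIcc_subset_uIcc_left hmem)) (hI.mono_set (Set.uIcc_subset_uIcc_right hmem)),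
    aux_subst x hx0 s] at hB
  have h3 := aux_subst (1 / x) (by positivity) (-s)
  have h4 := intervalIntegral.integral_comp_sub_left (a := 0) (b := 1 / (1 + 1 / x))
    (fun t : ℝ => (t : ℂ) ^ s * (1 - (t : ℂ)) ^ (-s)) 1
  have e5 : 1 - 1 / (1 + 1 / x) = 1 / (1 + x) := by field_simp; ring
  rw [e5, sub_zero] at h4
  rw [← h4] at hB
  have h6 : (∫ t in (0:ℝ)..(1 / (1 + 1 / x)),
      (((1 - t : ℝ) : ℂ) ^ s * (1 - ((1 - t : ℝ) : ℂ)) ^ (-s)))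
      = x * (x : ℂ) ^ (-s) * ∫ u in (0:ℝ)..1, (u : ℂ) ^ (-s) / (1 + x * (u : ℂ)) ^ 2 := by
    rw [← intervalIntegral.integral_const_mul]
    rw [← intervalIntegral.integral_const_mul] at h3
    simp only [ofReal_sub, ofReal_one, sub_sub_cancel]
    simp only [neg_neg] at h3
    rw [show (fun t : ℝ => (1 - (t:ℂ)) ^ s * (t:ℂ) ^ (-s))
      = fun t : ℝ => (t:ℂ) ^ (-s) * (1 - (t:ℂ)) ^ s from funext fun _ => mul_comm _ _, h3]
    refine intervalIntegral.integral_congr fun u hu => ?_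
    rw [Set.uIcc_of_le zero_le_one] at hu
    have hu0 := hu.1
    have hxu : (1 : ℂ) + x * u ≠ 0 := by
      have : (1 + x * u : ℝ) ≠ 0 := by positivity
      exact_mod_cast this
    have hxc : (x : ℂ) ≠ 0 := by exact_mod_cast hx0.ne'
    have h7 : (((1 / x : ℝ)) : ℂ) ^ s = (x : ℂ) ^ (-s) := by
      rw [one_div, ofReal_inv, inv_cpow _ _ (by rw [arg_ofReal_of_nonneg hx0.le]; exact Real.pi_pos.ne),
        cpow_neg]
    beta_reduce
    rw [h7]
    have h8 : (u : ℂ) + ((1 / x : ℝ) : ℂ) = (1 + x * u) / x := by push_cast; field_simp; ring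
    rw [h8]
    push_cast
    field_simp
  rw [h6] at hB
  rw [mul_add, hB]
  simp
  ring

lemma aux_series (x : ℝ) (hx0 : 0 < x) (hx1 : x < 1) (s : ℂ) (hs : s.re = 0) :
    HasSum (fun j : ℕ => ((j : ℂ) + 1) * (-x : ℂ) ^ j / ((j : ℂ) + 1 - s))
      (∫ u in (0:ℝ)..1, (u : ℂ) ^ (-s) / (1 + x * (u : ℂ)) ^ 2) := by
  have hsum : Summable (fun j : ℕ => ((j : ℝ) + 1) * x ^ j) := by
    have := (hasSum_choose_mul_geometric_of_norm_lt_one (𝕜 := ℝ) 1 (r := x)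
      (by rw [Real.norm_of_nonneg hx0.le]; exact hx1)).summable
    simpa using this
  have hre : ∀ j : ℕ, -1 < ((j : ℂ) - s).re := by
    intro j
    have : (0 : ℝ) ≤ j := Nat.cast_nonneg j
    simp [hs]
    linarith
  have key := intervalIntegral.hasSum_integral_of_dominated_convergence (a := 0) (b := 1)
    (μ := volume)
    (F := fun (j : ℕ) (u : ℝ) => ((j : ℂ) + 1) * (-x : ℂ) ^ j * (u : ℂ) ^ ((j : ℂ) - s))
    (f := fun u : ℝ => (u : ℂ) ^ (-s) / (1 + x * (u : ℂ)) ^ 2)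
    (fun j _ => ((j : ℝ) + 1) * x ^ j) ?_ ?_ ?_ ?_ ?_
  · convert! key using 1
    funext j
    have hj : (j : ℂ) - s + 1 ≠ 0 := by
      intro h
      have h' := congrArg re h
      simp [hs] at h'
      have : (0 : ℝ) ≤ j := Nat.cast_nonneg j
      linarith
    rw [intervalIntegral.integral_const_mul, integral_cpow (Or.inl (hre j)), ofReal_one, one_cpow,
      ofReal_zero, zero_cpow hj, sub_zero, mul_one_div, show (j : ℂ) + 1 - s = j - s + 1 by ring]
  · intro j
    have : IntervalIntegrable (fun u : ℝ => (u : ℂ) ^ ((j : ℂ) - s)) volume 0 1 :=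
      intervalIntegral.intervalIntegrable_cpow' (hre j)
    have := (this.const_mul (((j : ℂ) + 1) * (-x : ℂ) ^ j)).1.aestronglyMeasurable
    rwa [Set.uIoc_of_le zero_le_one]
  · intro j
    refine Eventually.of_forall fun u hu => ?_
    rw [Set.uIoc_of_le zero_le_one] at hu
    rw [norm_mul, norm_mul, norm_pow, norm_neg, norm_real, Real.norm_of_nonneg hx0.le,
      norm_cpow_eq_rpow_re_of_pos hu.1]
    have h1 : ‖(j : ℂ) + 1‖ = (j : ℝ) + 1 := by
      rw [← Nat.cast_succ, norm_natCast]; push_cast; rfl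
    rw [h1]
    refine mul_le_of_le_one_right (by positivity) ?_
    exact Real.rpow_le_one hu.1.le hu.2 (by simp [hs])
  · exact Eventually.of_forall fun _ _ => hsum
  · exact intervalIntegrable_const
  · refine Eventually.of_forall fun u hu => ?_
    rw [Set.uIoc_of_le zero_le_one] at hu
    have hu0 := hu.1
    have hn : ‖(-x * u : ℂ)‖ < 1 := by
      rw [norm_mul, norm_neg, norm_real, norm_real, Real.norm_of_nonneg hx0.le,
        Real.norm_of_nonneg hu0.le]
      nlinarith [hu.2]
    have := (hasSum_choose_mul_geometric_of_norm_lt_one (𝕜 := ℂ) 1 hn).mul_left ((u : ℂ) ^ (-s))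
    convert! this using 1
    · funext j
      have huc : (u : ℂ) ≠ 0 := by exact_mod_cast hu0.ne'
      rw [sub_eq_add_neg, cpow_add _ _ huc, cpow_natCast]
      simp
      ring
    · rw [show (1 : ℂ) - -x * u = 1 + x * u by ring]
      simp [div_eq_mul_inv]

lemma aux_parts (x : ℝ) (hx0 : 0 < x) (s : ℂ) (hs : s.re = 0) :
    s * (∫ y in (0:ℝ)..1, (y : ℂ) ^ s / ((y : ℂ) + x)) +
      x * (∫ y in (0:ℝ)..1, (y : ℂ) ^ s / ((y : ℂ) + x) ^ 2) = 1 / (1 + x) := by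
  have hne : ∀ y : ℝ, 0 ≤ y → (y : ℂ) + x ≠ 0 := by
    intro y hy
    have : (y + x : ℝ) ≠ 0 := by positivity
    exact_mod_cast this
  have hp : IntervalIntegrable (fun u : ℝ => (u : ℂ) ^ s) volume 0 1 :=
      intervalIntegral.intervalIntegrable_cpow' (by simp [hs])
  have h1 : IntervalIntegrable (fun y : ℝ => (y : ℂ) ^ s / ((y : ℂ) + x)) volume 0 1 := by
    refine hp.mul_continuousOn (g := fun y : ℝ => ((y : ℂ) + x)⁻¹) ?_
    refine ContinuousOn.inv₀ (by fun_prop) fun y hy => ?_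
    rw [Set.uIcc_of_le zero_le_one] at hy
    exact hne y hy.1
  have h2 : IntervalIntegrable (fun y : ℝ => (y : ℂ) ^ s / ((y : ℂ) + x) ^ 2) volume 0 1 := by
    refine hp.mul_continuousOn (g := fun y : ℝ => (((y : ℂ) + x) ^ 2)⁻¹) ?_
    refine ContinuousOn.inv₀ (by fun_prop) fun y hy => ?_
    rw [Set.uIcc_of_le zero_le_one] at hy
    exact pow_ne_zero _ (hne y hy.1)
  have hs1 : s + 1 ≠ 0 := by
    intro h
    have := congrArg re h
    simp [hs] at this
  have key := intervalIntegral.integral_eq_sub_of_hasDerivAt_of_le (a := 0) (b := 1)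
    (f := fun y : ℝ => (y : ℂ) ^ (s + 1) / ((y : ℂ) + x))
    (f' := fun y : ℝ => s * ((y : ℂ) ^ s / ((y : ℂ) + x)) + x * ((y : ℂ) ^ s / ((y : ℂ) + x) ^ 2))
    zero_le_one ?_ ?_ ((h1.const_mul s).add (h2.const_mul _))
  · rw [intervalIntegral.integral_add (h1.const_mul s) (h2.const_mul _),
      intervalIntegral.integral_const_mul, intervalIntegral.integral_const_mul] at key
    rw [key]
    simp [zero_cpow hs1]
  · refine ContinuousOn.div ?_ (by fun_prop) fun y hy => hne y hy.1
    exact (continuous_ofReal_cpow_const (by simp [hs])).continuousOn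
  · intro y hy
    have hy0 := hy.1
    have huc : (y : ℂ) ≠ 0 := by exact_mod_cast hy0.ne'
    have hh := hne y hy0.le
    have := (hasDerivAt_ofReal_cpow_const hy0.ne' hs1).div
      ((ofRealCLM.hasDerivAt (x := y)).add_const (x : ℂ)) hh
    convert! this using 1
    simp only [ofRealCLM_apply, ofReal_one, add_sub_cancel_right]
    rw [cpow_add _ _ huc, cpow_one]
    field_simp
    ring

theorem singular_integral_M_series (x δ : ℝ) (hx0 : 0 < x) (hx1 : x < 1) (hδ : δ ≠ 0) :
    Summable (fun j : ℕ => ‖(-1 : ℂ) ^ j * (x : ℂ) ^ j / (Complex.I * (δ : ℂ) - (j : ℂ))‖) ∧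
    ∫ y in (0 : ℝ)..1, (y : ℂ) ^ (Complex.I * (δ : ℂ)) / ((y : ℂ) + (x : ℂ))
      = ↑Real.pi * Complex.I * (x : ℂ) ^ (Complex.I * (δ : ℂ)) / (Real.sinh (Real.pi * δ) : ℂ)
        + ∑' j : ℕ, (-1 : ℂ) ^ j * (x : ℂ) ^ j / (Complex.I * (δ : ℂ) - (j : ℂ)) := by
  have hδc : (δ : ℂ) ≠ 0 := by exact_mod_cast hδ
  have hsre : (I * (δ : ℂ)).re = 0 := by simp
  have hs0 : I * (δ : ℂ) ≠ 0 := mul_ne_zero I_ne_zero hδc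
  have hsin : Complex.sin (Real.pi * (I * δ)) = (Real.sinh (Real.pi * δ) : ℂ) * I := by
    rw [show (Real.pi : ℂ) * (I * δ) = ((Real.pi * δ : ℝ) : ℂ) * I by push_cast; ring,
      sin_mul_I, ofReal_sinh]
  have hsh : (Real.sinh (Real.pi * δ) : ℂ) ≠ 0 := by
    have : Real.sinh (Real.pi * δ) ≠ 0 := by
      rw [Ne, Real.sinh_eq_zero]
      exact mul_ne_zero Real.pi_ne_zero hδ
    exact_mod_cast this
  have hsj : ∀ j : ℕ, I * (δ : ℂ) - j ≠ 0 := by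
    intro j h
    have := congrArg im h
    simp [hδ] at this
  have hB := aux_beta x hx0 _ hsre hs0
  have hS := aux_series x hx0 hx1 _ hsre
  have hP := aux_parts x hx0 _ hsre
  rw [hsin] at hB
  generalize hsd : I * (δ : ℂ) = s at *
  set Q := ∫ u in (0:ℝ)..1, (u : ℂ) ^ (-s) / (1 + x * (u : ℂ)) ^ 2
  set P := ∫ y in (0:ℝ)..1, (y : ℂ) ^ s / ((y : ℂ) + x) ^ 2
  set F := ∫ y in (0:ℝ)..1, (y : ℂ) ^ s / ((y : ℂ) + x)
  have hn : ‖(-x : ℂ)‖ < 1 := by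
    rw [norm_neg, norm_real, Real.norm_of_nonneg hx0.le]; exact hx1
  have hg := hasSum_geometric_of_norm_lt_one hn
  -- the shifted series
  have hS1 : HasSum (fun j : ℕ => (j : ℂ) * (-x : ℂ) ^ j / ((j : ℂ) - s)) (-x * Q) := by
    rw [← hasSum_nat_add_iff' 1]
    simp only [Finset.range_one, Finset.sum_singleton, Nat.cast_zero, zero_mul, zero_div, sub_zero]
    convert! hS.mul_left (-x : ℂ) using 1
    funext j
    push_cast
    ring
  have hM : HasSum (fun j : ℕ => (-1 : ℂ) ^ j * (x : ℂ) ^ j / (s - (j : ℂ)))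
      ((1 / s) * ((1 - (-x : ℂ))⁻¹ - (-x * Q))) := by
    convert! (hg.sub hS1).mul_left (1 / s) using 1
    funext j
    have h1 := hsj j
    have h2 : (j : ℂ) - s ≠ 0 := by rw [← neg_ne_zero, neg_sub]; exact h1
    rw [← mul_pow, neg_one_mul]
    have h3 : (-x : ℂ) ^ j - j * (-x : ℂ) ^ j / (j - s) = s * ((-x : ℂ) ^ j / (s - j)) := by
      rw [← neg_sub s (j : ℂ)]
      field_simp
      ring
    rw [h3]
    field_simp
  refine ⟨hM.summable.norm, ?_⟩
  rw [hM.tsum_eq]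
  have hxs : (x : ℂ) ^ s ≠ 0 := by
    have : (x : ℂ) ≠ 0 := by exact_mod_cast hx0.ne'
    simp [cpow_eq_zero_iff, this]
  have h1x : (1 : ℂ) + x ≠ 0 := by
    have : (1 + x : ℝ) ≠ 0 := by positivity
    exact_mod_cast this
  rw [cpow_neg] at hB
  have hB' : x * (P + Q) = - (x : ℂ) ^ s * (Real.pi * s * I / (Real.sinh (Real.pi * δ) : ℂ)) := by
    have : x * (P + Q) = (x : ℂ) ^ s * (x * ((x : ℂ) ^ s)⁻¹ * (P + Q)) := by field_simp
    rw [this, hB, div_mul_eq_div_div, div_I]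
    ring
  have hfin : s * F = s * (↑Real.pi * I * (x : ℂ) ^ s / (Real.sinh (Real.pi * δ) : ℂ)
      + 1 / s * ((1 - (-x : ℂ))⁻¹ - (-x * Q))) := by
    have h5 : s * F = 1 / (1 + x) - x * (P + Q) + x * Q := by linear_combination hP
    rw [h5, hB', sub_neg_eq_add]
    field_simp
    ring
  exact mul_left_cancel₀ hs0 hfin
end
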